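/- For all integers n ≥ 0 and 0 ≤ k ≤ n, one has f_n(k) − f_{n+1}(k) = h(n,k+1) − h(n,k). -/

import Mathlib

/-- `f_n(k) = (−1)^k · 2^{n−k} · (3n−3k+2) · C_{n−k} · (n+k+1)!·(2n−k+1)! / (k!·(3n−k+2)!)`. -/
def fnk (n k : ℕ) : ℚ :=
  (-1)^k * 2^(n-k) * (3*(n:ℚ) - 3*(k:ℚ) + 2) * (catalan (n-k) : ℚ) *
    (Nat.factorial (n+k+1) : ℚ) * (Nat.factorial (2*n-k+1) : ℚ) /
    ((Nat.factorial k : ℚ) * (Nat.factorial (3*n-k+2) : ℚ))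

/-- The WZ certificate: for `1 ≤ k ≤ n+1`,
`h(n,k) = (−1)^k·2^{n−k+1}·(n+2−k)(n−k+1)(5n−3k+8)·(2n+2−k)!·(n+1+k)!·(2n+2−2k)!
          / ((k−1)!·((n+2−k)!)²·(3n+5−k)!)`, and `h(n,0) = 0`. -/
def hcert (n k : ℕ) : ℚ :=
  if k = 0 then 0 else
    (-1)^k * 2^(n+1-k) * ((n:ℚ)+2-(k:ℚ)) * ((n:ℚ)-(k:ℚ)+1) * (5*(n:ℚ)-3*(k:ℚ)+8) *
      (Nat.factorial (2*n+2-k) : ℚ) * (Nat.factorial (n+1+k) : ℚ) *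
      (Nat.factorial (2*n+2-2*k) : ℚ) /
      ((Nat.factorial (k-1) : ℚ) * (Nat.factorial (n+2-k) : ℚ)^2 *
        (Nat.factorial (3*n+5-k) : ℚ))

/-!
Writing `n = k + m`, all four terms of the identity are rational multiples of the single
hypergeometric term `wzTerm k m`, whose shift quotients in `k` and in `m` are rational functions.
Dividing by `wzTerm k m` turns the claim into an identity between rational functions of `k` and `m`.
-/

open Nat

theorem catalan_mul_factorial_mul_factorial_succ (m : ℕ) :
    catalan m * m ! * (m + 1)! = (2 * m)! := by
  calc catalan m * m ! * (m + 1)! = (m + 1) * catalan m * m ! * m ! := by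
        rw [factorial_succ]; ring
    _ = (2 * m).choose m * m ! * (2 * m - m)! := by
        rw [succ_mul_catalan_eq_centralBinom, centralBinom_eq_two_mul_choose, two_mul,
          Nat.add_sub_cancel]
    _ = (2 * m)! := choose_mul_factorial_mul_factorial (by lia)

theorem add_two_mul_catalan_succ (m : ℕ) :
    (m + 2) * catalan (m + 1) = 2 * (2 * m + 1) * catalan m := by
  refine Nat.eq_of_mul_eq_mul_left m.succ_pos ?_
  calc (m + 1) * ((m + 2) * catalan (m + 1)) = (m + 1) * centralBinom (m + 1) := by
        rw [← succ_mul_catalan_eq_centralBinom]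
    _ = 2 * (2 * m + 1) * centralBinom m := succ_mul_centralBinom_succ m
    _ = (m + 1) * (2 * (2 * m + 1) * catalan m) := by
        rw [← succ_mul_catalan_eq_centralBinom]; ring

/-- The hypergeometric term of which `fnk (k + m) k` and `hcert (k + m) (k + 1)` are rational
multiples. The second index `m` stands for `n − k`, so that no truncated subtraction occurs. -/
def wzTerm (k m : ℕ) : ℚ :=
  (-1) ^ k * 2 ^ m * catalan m * (2 * k + m + 1)! * (k + 2 * m + 1)! /
    (k ! * (2 * k + 3 * m + 2)!)

theorem wzTerm_succ_left (k m : ℕ) :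
    wzTerm (k + 1) m =
      -((2 * k + m + 2) * (2 * k + m + 3) * (k + 2 * m + 2)) /
        ((k + 1) * (2 * k + 3 * m + 3) * (2 * k + 3 * m + 4)) * wzTerm k m := by
  have numerator_left : 2 * (k + 1) + m + 1 = 2 * k + m + 1 + 1 + 1 := by ring
  have numerator_right : k + 1 + 2 * m + 1 = k + 2 * m + 1 + 1 := by ring
  have denominator : 2 * (k + 1) + 3 * m + 2 = 2 * k + 3 * m + 2 + 1 + 1 := by ring
  simp only [wzTerm, numerator_left, numerator_right, denominator, factorial_succ (_ + 1),
    factorial_succ k]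
  push_cast
  field_simp
  ring

theorem wzTerm_succ_right (k m : ℕ) :
    wzTerm k (m + 1) =
      4 * (2 * m + 1) * (2 * k + m + 2) * (k + 2 * m + 2) * (k + 2 * m + 3) /
        ((m + 2) * (2 * k + 3 * m + 3) * (2 * k + 3 * m + 4) * (2 * k + 3 * m + 5)) *
          wzTerm k m := by
  have catalan_quotient : (catalan (m + 1) : ℚ) = 2 * (2 * m + 1) / (m + 2) * catalan m := by
    rw [div_mul_eq_mul_div, eq_div_iff (by positivity), mul_comm]
    exact_mod_cast add_two_mul_catalan_succ m
  have numerator_left : 2 * k + (m + 1) + 1 = 2 * k + m + 1 + 1 := by ring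
  have numerator_right : k + 2 * (m + 1) + 1 = k + 2 * m + 1 + 1 + 1 := by ring
  have denominator : 2 * k + 3 * (m + 1) + 2 = 2 * k + 3 * m + 2 + 1 + 1 + 1 := by ring
  simp only [wzTerm, catalan_quotient, numerator_left, numerator_right, denominator,
    factorial_succ (_ + 1)]
  push_cast
  field_simp
  ring

theorem fnk_add_left (k m : ℕ) : fnk (k + m) k = (3 * m + 2) * wzTerm k m := by
  have numerator_left : k + m + k + 1 = 2 * k + m + 1 := by ring
  have numerator_right : 2 * (k + m) - k + 1 = k + 2 * m + 1 := by lia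
  have denominator : 3 * (k + m) - k + 2 = 2 * k + 3 * m + 2 := by lia
  rw [fnk, wzTerm, Nat.add_sub_cancel_left, numerator_left, numerator_right, denominator]
  push_cast
  ring

theorem hcert_add_left_succ (k m : ℕ) :
    hcert (k + m) (k + 1) =
      -(m * (2 * k + 5 * m + 5) * (2 * k + m + 2)) /
        ((2 * k + 3 * m + 3) * (2 * k + 3 * m + 4)) * wzTerm k m := by
  have power : k + m + 1 - (k + 1) = m := by lia
  have numerator_left : k + m + 1 + (k + 1) = 2 * k + m + 1 + 1 := by ring
  have numerator_right : 2 * (k + m) + 2 - (k + 1) = k + 2 * m + 1 := by lia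
  have numerator_catalan : 2 * (k + m) + 2 - 2 * (k + 1) = 2 * m := by lia
  have denominator_catalan : k + m + 2 - (k + 1) = m + 1 := by lia
  have denominator : 3 * (k + m) + 5 - (k + 1) = 2 * k + 3 * m + 2 + 1 + 1 := by lia
  rw [hcert, if_neg k.succ_ne_zero, power, numerator_left, numerator_right, numerator_catalan,
    denominator_catalan, denominator, Nat.add_sub_cancel,
    ← catalan_mul_factorial_mul_factorial_succ, wzTerm, factorial_succ (2 * k + m + 1),
    factorial_succ (2 * k + 3 * m + 2 + 1), factorial_succ (2 * k + 3 * m + 2), factorial_succ m]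
  push_cast
  field_simp
  ring

theorem hcert_add_left (k m : ℕ) :
    hcert (k + m) k =
      k * (m + 1) * (2 * k + 5 * m + 8) / ((2 * k + m + 2) * (k + 2 * m + 3)) *
        wzTerm k (m + 1) := by
  cases k with
  | zero => simp [hcert]
  | succ j =>
    rw [Nat.add_right_comm, Nat.add_assoc j, hcert_add_left_succ, wzTerm_succ_left]
    push_cast
    field_simp
    ring

/-- For all `n ≥ 0` and `0 ≤ k ≤ n`: `f_n(k) − f_{n+1}(k) = h(n,k+1) − h(n,k)`. -/
theorem fnk_wz (n k : ℕ) (hk : k ≤ n) :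
    fnk n k - fnk (n+1) k = hcert n (k+1) - hcert n k := by
  obtain ⟨m, rfl⟩ := Nat.exists_eq_add_of_le hk
  rw [hcert_add_left_succ, hcert_add_left, fnk_add_left, Nat.add_assoc, fnk_add_left,
    wzTerm_succ_right]
  push_cast
  field_simp
  ring
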